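/- Let {ι i : U i → U}_{i ∈ I} be a gluing covering of a topological space U. Define for each pair (i, j) the space W i j := {p : U i × U j | ι i p.1 = ι j p.2} with the subspace topology, the continuous first projection υ i j : W i j → U i, and the continuous swap map φ i j : W i j → W j i, (x, y) ↦ (y, x). Then (U, W, υ, φ) is a topological gluing datum over I (it satisfies axioms (i), (ii), (iii) below), the maps ι i satisfy the cone compatibility ι i ∘ (υ i j) = ι j ∘ (υ j i) ∘ (φ i j), and the unique continuous map μ : Q → U from the glued space Q of this datum satisfying μ ∘ ι' i = ι i for all i (where ι' i : U i → Q are the canonical maps) is a continuous bijection. Moreover, if the covering is a gluing open covering, then μ is a homeomorphism. -/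

import Mathlib

open Set Function Topology

/-- The gluing relation on the sigma type `Σ i, U i` associated with a gluing datum:
`⟨i, x⟩ ~ ⟨j, y⟩` iff there exists `u : W i j` with `υ i j u = x` and `υ j i (φ i j u) = y`. -/
def glueRel {I : Type*} (U : I → Type*) (W : I → I → Type*)
    (υ : ∀ i j, W i j → U i) (φ : ∀ i j, W i j → W j i) :
    (Σ i, U i) → (Σ i, U i) → Prop :=
  fun p q => ∃ u : W p.1 q.1, υ p.1 q.1 u = p.2 ∧ υ q.1 p.1 (φ p.1 q.1 u) = q.2

/-- The glued space: the quotient of `Σ i, U i` by the gluing relation, equipped with the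
quotient topology. -/
abbrev Glued {I : Type*} (U : I → Type*) (W : I → I → Type*)
    (υ : ∀ i j, W i j → U i) (φ : ∀ i j, W i j → W j i) : Type _ :=
  Quot (glueRel U W υ φ)

/-- The canonical map `U i → Q` into the glued space. -/
def glueι {I : Type*} (U : I → Type*) (W : I → I → Type*)
    (υ : ∀ i j, W i j → U i) (φ : ∀ i j, W i j → W j i) (i : I) :
    U i → Glued U W υ φ :=
  fun x => Quot.mk _ ⟨i, x⟩

/-- The overlap piece of two members of a gluing covering, with the subspace topology of the
product. -/
abbrev covW {I : Type*} {U : Type*} (Ui : I → Type*) (ι : ∀ i, Ui i → U)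
    (i j : I) : Type _ :=
  {p : Ui i × Ui j // ι i p.1 = ι j p.2}

/-- The first projection from an overlap piece. -/
def covυ {I : Type*} {U : Type*} (Ui : I → Type*) (ι : ∀ i, Ui i → U)
    (i j : I) : covW Ui ι i j → Ui i :=
  fun p => p.1.1

/-- The swap map between overlap pieces. -/
def covφ {I : Type*} {U : Type*} (Ui : I → Type*) (ι : ∀ i, Ui i → U)
    (i j : I) : covW Ui ι i j → covW Ui ι j i :=
  fun p => ⟨(p.1.2, p.1.1), p.2.symm⟩

/-!
In the glued space of the overlaps, `⟨i, x⟩` and `⟨j, y⟩` are related exactly when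
`ι i x = ι j y`, the overlap piece being the fibre product. So the glued space is the quotient of
`Σ i, Ui i` by the kernel of the total map `⟨i, x⟩ ↦ ι i x`, and the induced map to `U` is injective
for any family `ι`; covering gives surjectivity. The quotient map onto the glued space is continuous
and surjective, so the induced map is open as soon as the total map is.
-/

namespace Glued

variable {I X : Type*} {U : I → Type*} {W : I → I → Type*} {υ : ∀ i j, W i j → U i}
  {φ : ∀ i j, W i j → W j i} {f : ∀ i, U i → X}

/-- The map out of the glued space induced by maps `f i : U i → X` that agree on the overlaps: the
map given by the universal property of the glued space. -/
def desc (f : ∀ i, U i → X) (hf : ∀ i j, f i ∘ υ i j = f j ∘ υ j i ∘ φ i j) :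
    Glued U W υ φ → X :=
  Quot.lift (fun p => f p.1 p.2) fun p q ⟨u, hp, hq⟩ => by
    simpa only [comp_apply, hp, hq] using congrFun (hf p.1 q.1) u

theorem comp_glueι_eq_iff_eq_desc (hf : ∀ i j, f i ∘ υ i j = f j ∘ υ j i ∘ φ i j)
    {μ : Glued U W υ φ → X} : (∀ i, μ ∘ glueι U W υ φ i = f i) ↔ μ = desc f hf := by
  refine ⟨fun hμ => ?_, ?_⟩
  · ext ⟨i, x⟩
    exact congrFun (hμ i) x
  · rintro rfl i
    rfl

theorem desc_injective (hf : ∀ i j, f i ∘ υ i j = f j ∘ υ j i ∘ φ i j)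
    (hrel : ∀ i j x y, f i x = f j y → glueRel U W υ φ ⟨i, x⟩ ⟨j, y⟩) :
    Injective (desc f hf) := by
  rintro ⟨i, x⟩ ⟨j, y⟩ hxy
  exact Quot.sound (hrel i j x y hxy)

theorem desc_surjective (hf : ∀ i j, f i ∘ υ i j = f j ∘ υ j i ∘ φ i j)
    (hcov : ⋃ i, range (f i) = univ) : Surjective (desc f hf) := by
  intro z
  obtain ⟨i, x, hx⟩ := iUnion_eq_univ_iff.mp hcov z
  exact ⟨glueι U W υ φ i x, hx⟩

variable [∀ i, TopologicalSpace (U i)] [TopologicalSpace X]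

theorem continuous_desc (hf : ∀ i j, f i ∘ υ i j = f j ∘ υ j i ∘ φ i j)
    (hc : ∀ i, Continuous (f i)) : Continuous (desc f hf) :=
  continuous_quot_lift _ (continuous_sigma hc)

theorem isOpenMap_desc (hf : ∀ i j, f i ∘ υ i j = f j ∘ υ j i ∘ φ i j)
    (ho : ∀ i, IsOpenMap (f i)) : IsOpenMap (desc f hf) :=
  IsOpenMap.of_comp continuous_quot_mk Quot.mk_surjective (isOpenMap_sigma.mpr ho)

end Glued

section Covering

variable {I U : Type*} {Ui : I → Type*} {ι : ∀ i, Ui i → U} {i j k : I}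

theorem covυ_injective (hj : Injective (ι j)) : Injective (covυ Ui ι i j) := fun p q hpq =>
  have hι : ι j p.1.2 = ι j q.1.2 := p.2.symm.trans ((congrArg (ι i) hpq).trans q.2)
  Subtype.ext (Prod.ext hpq (hj hι))

theorem covυ_self_surjective : Surjective (covυ Ui ι i i) := fun x => ⟨⟨(x, x), rfl⟩, rfl⟩

theorem covυ_covφ_self (hi : Injective (ι i)) (u : covW Ui ι i i) :
    covυ Ui ι i i (covφ Ui ι i i u) = covυ Ui ι i i u :=
  hi u.2.symm

theorem covφ_covφ (u : covW Ui ι i j) : covφ Ui ι j i (covφ Ui ι i j u) = u := rfl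

theorem covW_cocycle (u : covW Ui ι i j) (v : covW Ui ι j k)
    (huv : covυ Ui ι j i (covφ Ui ι i j u) = covυ Ui ι j k v) :
    ∃ w : covW Ui ι i k, covυ Ui ι i k w = covυ Ui ι i j u ∧
      covυ Ui ι k i (covφ Ui ι i k w) = covυ Ui ι k j (covφ Ui ι j k v) :=
  have hι : ι i u.1.1 = ι k v.1.2 := u.2.trans ((congrArg (ι j) huv).trans v.2)
  ⟨⟨(u.1.1, v.1.2), hι⟩, rfl, rfl⟩

theorem comp_covυ_eq_comp_covυ_comp_covφ (ι : ∀ i, Ui i → U) (i j : I) :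
    ι i ∘ covυ Ui ι i j = ι j ∘ covυ Ui ι j i ∘ covφ Ui ι i j :=
  funext fun u => u.2

theorem glueRel_cov_iff {x : Ui i} {y : Ui j} :
    glueRel Ui (covW Ui ι) (covυ Ui ι) (covφ Ui ι) ⟨i, x⟩ ⟨j, y⟩ ↔ ι i x = ι j y := by
  refine ⟨fun ⟨u, hx, hy⟩ => ?_, fun hxy => ⟨⟨(x, y), hxy⟩, rfl, rfl⟩⟩
  calc
    ι i x = ι i u.1.1 := congrArg (ι i) hx.symm
    _ = ι j u.1.2 := u.2
    _ = ι j y := congrArg (ι j) hy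

/-- The map to `U` from the space glued along the overlaps of a family `ι i : Ui i → U`; for a
gluing covering it is the comparison map `μ`. -/
def covDesc (ι : ∀ i, Ui i → U) : Glued Ui (covW Ui ι) (covυ Ui ι) (covφ Ui ι) → U :=
  Glued.desc ι (comp_covυ_eq_comp_covυ_comp_covφ ι)

theorem covDesc_bijective (hcov : ⋃ i, range (ι i) = univ) : Bijective (covDesc ι) :=
  ⟨Glued.desc_injective _ fun _ _ _ _ => glueRel_cov_iff.mpr, Glued.desc_surjective _ hcov⟩

variable [∀ i, TopologicalSpace (Ui i)]

theorem continuous_covυ : Continuous (covυ Ui ι i j) :=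
  continuous_fst.comp continuous_subtype_val

theorem continuous_covφ : Continuous (covφ Ui ι i j) :=
  (continuous_swap.comp continuous_subtype_val).subtype_mk _

variable [TopologicalSpace U]

theorem continuous_covDesc (hc : ∀ i, Continuous (ι i)) : Continuous (covDesc ι) :=
  Glued.continuous_desc _ hc

theorem isHomeomorph_covDesc (hc : ∀ i, Continuous (ι i)) (hcov : ⋃ i, range (ι i) = univ)
    (ho : ∀ i, IsOpenMap (ι i)) : IsHomeomorph (covDesc ι) :=
  ⟨continuous_covDesc hc, Glued.isOpenMap_desc _ ho, covDesc_bijective hcov⟩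

end Covering

/-- A gluing covering of `U` gives rise to a topological gluing datum whose glued space maps
bijectively (and continuously) onto `U`; for a gluing open covering this canonical map is a
homeomorphism. -/
theorem gluing_covering_gluingDatum {I : Type*}
    (U : Type*) [TopologicalSpace U]
    (Ui : I → Type*) [∀ i, TopologicalSpace (Ui i)]
    (ι : ∀ i, Ui i → U)
    (hιc : ∀ i, Continuous (ι i)) (hιinj : ∀ i, Function.Injective (ι i))
    (hιcov : ⋃ i, Set.range (ι i) = Set.univ) :
    (∀ i j, Continuous (covυ Ui ι i j)) ∧
    (∀ i j, Continuous (covφ Ui ι i j)) ∧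
    (∀ i, Function.Bijective (covυ Ui ι i i)) ∧
    (∀ i (u : covW Ui ι i i), covυ Ui ι i i (covφ Ui ι i i u) = covυ Ui ι i i u) ∧
    (∀ i j (u : covW Ui ι i j), covφ Ui ι j i (covφ Ui ι i j u) = u) ∧
    (∀ i j k (u : covW Ui ι i j) (v : covW Ui ι j k),
      covυ Ui ι j i (covφ Ui ι i j u) = covυ Ui ι j k v →
      ∃ w : covW Ui ι i k, covυ Ui ι i k w = covυ Ui ι i j u ∧
        covυ Ui ι k i (covφ Ui ι i k w) = covυ Ui ι k j (covφ Ui ι j k v)) ∧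
    (∀ i j, (ι i) ∘ (covυ Ui ι i j) = (ι j) ∘ (covυ Ui ι j i) ∘ (covφ Ui ι i j)) ∧
    (∀ μ : Glued Ui (covW Ui ι) (covυ Ui ι) (covφ Ui ι) → U,
      Continuous μ → (∀ i, μ ∘ glueι Ui (covW Ui ι) (covυ Ui ι) (covφ Ui ι) i = ι i) →
      (Continuous μ ∧ Function.Bijective μ) ∧
        ((∀ i, IsOpenMap (ι i)) → IsHomeomorph μ)) := by
  refine ⟨fun _ _ => continuous_covυ, fun _ _ => continuous_covφ,
    fun i => ⟨covυ_injective (hιinj i), covυ_self_surjective⟩, fun i => covυ_covφ_self (hιinj i),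
    fun _ _ => covφ_covφ, fun _ _ _ => covW_cocycle, comp_covυ_eq_comp_covυ_comp_covφ ι, ?_⟩
  intro μ _ hμι
  obtain rfl : μ = covDesc ι := (Glued.comp_glueι_eq_iff_eq_desc _).mp hμι
  exact ⟨⟨continuous_covDesc hιc, covDesc_bijective hιcov⟩, isHomeomorph_covDesc hιc hιcov⟩
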